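/- Extended generalized Faulhaber formula with shift parameter: Let m ∈ ℂ with m ≠ −1, let x ∈ ℝ with x > 0, and let a ∈ ℕ₀. Then the series ∑_{k=1}^{∞} (−1)^{k+a} (∑_{l=1}^{k} C(m+1, l+a) S_k^{(1)}(l) B_{l+a}({x})) / ((x+1)(x+2)⋯(x+k)) converges absolutely, and ∑_{k=1}^{⌊x⌋} k^m = x^{m+1}/(m+1) + ζ(−m) + (1/(m+1)) ∑_{k=1}^{a} (−1)^k C(m+1, k) B_k({x}) x^{m−k+1} + (x^{m−a+1}/(m+1)) ∑_{k=1}^{∞} (−1)^{k+a} (∑_{l=1}^{k} C(m+1, l+a) S_k^{(1)}(l) B_{l+a}({x})) / ((x+1)(x+2)⋯(x+k)). -/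

import Mathlib

open Finset in
/-- Unsigned Stirling numbers of the first kind, via the rising-factorial recurrence:
`z(z+1)⋯(z+k−1) = ∑ l, stirling1Unsigned k l * z^l`. -/
def stirling1Unsigned : ℕ → ℕ → ℕ
  | 0, 0 => 1
  | 0, _ + 1 => 0
  | k + 1, 0 => k * stirling1Unsigned k 0
  | k + 1, l + 1 => stirling1Unsigned k l + k * stirling1Unsigned k (l + 1)

/-- The Stirling numbers of the first kind `S_k^{(1)}(l)` of the paper, defined by
`z(z+1)⋯(z+k−1) = (−1)^k ∑_{l=0}^k (−1)^l S_k^{(1)}(l) z^l`, i.e.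
`S_k^{(1)}(l) = (−1)^{k−l}` times the coefficient of `z^l` in the rising factorial. -/
def S1 (k l : ℕ) : ℤ := (-1) ^ (k + l) * stirling1Unsigned k l

/-- The `n`-th Bernoulli polynomial `B_n(x) = ∑_{k=0}^n C(n,k) B_k x^{n−k}`,
with `B_1 = −1/2`. -/
noncomputable def bernPoly (n : ℕ) (x : ℝ) : ℝ :=
  ∑ k ∈ Finset.range (n + 1), (n.choose k : ℝ) * (bernoulli k : ℝ) * x ^ (n - k)

/-- The generalized binomial coefficient `C(w,k) = w(w−1)⋯(w−k+1)/k!`. -/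
noncomputable def cchoose (w : ℂ) (k : ℕ) : ℂ :=
  (∏ i ∈ Finset.range k, (w - i)) / (k.factorial : ℂ)

/-- The rising product `(z+1)(z+2)⋯(z+k)`. -/
noncomputable def risingProd (z : ℂ) (k : ℕ) : ℂ :=
  ∏ i ∈ Finset.range k, (z + i + 1)

/-- The rising product `(x+1)(x+2)⋯(x+k)` over the reals. -/
noncomputable def risingProdR (x : ℝ) (k : ℕ) : ℝ :=
  ∏ i ∈ Finset.range k, (x + i + 1)

/-- The digamma function `ψ(z) = Γ′(z)/Γ(z)`. -/
noncomputable def digamma (z : ℂ) : ℂ := deriv Complex.Gamma z / Complex.Gamma z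
open Finset Filter Topology in
lemma L1_lim (f : ℕ → ℂ) (hf : Summable fun k => ‖f k‖) (L : ℂ)
    (hL : Tendsto (fun n : ℕ => ((n:ℂ)+1) * f n) atTop (𝓝 L)) : L = 0 := by
  by_contra hne
  have hpos : 0 < ‖L‖ := norm_pos_iff.mpr hne
  have h1 : ∀ᶠ n : ℕ in atTop, ‖L‖/2 < ‖((n:ℂ)+1) * f n‖ :=
    (hL.norm).eventually_const_lt (by linarith)
  have h2 : Summable (fun n : ℕ => (1:ℝ)/((n:ℝ)+1)) := by
    have h3 : Summable (fun n : ℕ => (2/‖L‖) * ‖f n‖) := hf.mul_left _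
    refine Summable.of_norm_bounded_eventually_nat h3 ?_
    filter_upwards [h1] with n hn
    have hn1 : (0:ℝ) < (n:ℝ)+1 := by positivity
    have e : ‖((n:ℂ)+1)‖ = (n:ℝ)+1 := by
      have : ((n:ℂ)+1) = (((n:ℝ)+1 : ℝ):ℂ) := by push_cast; rfl
      rw [this, Complex.norm_real, Real.norm_of_nonneg hn1.le]
    rw [norm_mul, e] at hn
    rw [Real.norm_of_nonneg (by positivity), div_le_iff₀ hn1, div_mul_eq_mul_div, div_mul_eq_mul_div,
      le_div_iff₀ hpos]
    nlinarith
  have := (summable_nat_add_iff (f := fun n : ℕ => (1:ℝ)/(n:ℝ)) 1).mp (by simpa using h2)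
  exact Real.not_summable_one_div_natCast this

open Finset Filter Topology in
lemma L1 (x : ℝ) (hx : 0 < x) (A D : ℕ → ℂ)
    (h : ∀ k : ℕ, ((x:ℂ)+k+1) * A (k+1) = k * A k + D k)
    (hD : Summable fun k => ‖D k‖) :
    Summable (fun k => ‖A (k+1)‖) ∧ (x:ℂ) * ∑' k, A (k+1) = ∑' k, D k := by
  have hb : ∀ n : ℕ, (n:ℝ) * ‖A n‖ + x * ∑ k ∈ range n, ‖A (k+1)‖ ≤ ∑ k ∈ range n, ‖D k‖ := by
    intro n
    induction n with
    | zero => simp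
    | succ n ih =>
      rw [sum_range_succ, sum_range_succ]
      have e : ‖((x:ℂ)+n+1)‖ = x + n + 1 := by
        have : ((x:ℂ)+n+1) = ((x + n + 1 : ℝ):ℂ) := by push_cast; rfl
        rw [this, Complex.norm_real, Real.norm_of_nonneg (by positivity)]
      have h3 : (x+n+1) * ‖A (n+1)‖ ≤ n * ‖A n‖ + ‖D n‖ := by
        rw [← e, ← norm_mul, h]
        refine (norm_add_le _ _).trans ?_
        simp
      push_cast
      nlinarith
  have hs : Summable (fun k => ‖A (k+1)‖) := by
    refine summable_of_sum_range_le (c := (∑' k, ‖D k‖)/x) (fun _ => norm_nonneg _) fun n => ?_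
    rw [le_div_iff₀ hx]
    have h1 := hb n
    have h2 := hD.sum_le_tsum (range n) (fun _ _ => norm_nonneg _)
    have : 0 ≤ (n:ℝ) * ‖A n‖ := by positivity
    linarith
  refine ⟨hs, ?_⟩
  have hid : ∀ n : ℕ, (n:ℂ) * A n = ∑ k ∈ range n, D k - x * ∑ k ∈ range n, A (k+1) := by
    intro n
    induction n with
    | zero => simp
    | succ n ih =>
      rw [sum_range_succ, sum_range_succ]
      have := h n
      push_cast
      linear_combination this + ih
  have t1 := hD.of_norm.hasSum.tendsto_sum_nat
  have t2 := (hs.of_norm.hasSum.tendsto_sum_nat).const_mul (x:ℂ)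
  have t3 := (t1.sub t2).comp (tendsto_add_atTop_nat 1)
  have := L1_lim (fun k => A (k+1)) hs _ (t3.congr fun n => by
    simp only [Function.comp]
    rw [← hid]; push_cast; rfl)
  exact (sub_eq_zero.mp this).symm

/-- signed coefficients -/
noncomputable def cc (m : ℂ) (θ : ℝ) (n : ℕ) : ℂ := (-1)^n * cchoose (m+1) n * (bernPoly n θ : ℂ)

noncomputable def TT (m : ℂ) (θ : ℝ) (a k : ℕ) : ℂ :=
  ∑ l ∈ Finset.Icc 1 k, cc m θ (l+a) * (stirling1Unsigned k l : ℂ)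

lemma st_zero_of_lt : ∀ k l : ℕ, k < l → stirling1Unsigned k l = 0
  | 0, 0, h => by omega
  | 0, l+1, _ => by simp [stirling1Unsigned]
  | k+1, 0, h => by omega
  | k+1, l+1, h => by
    rw [stirling1Unsigned, st_zero_of_lt k l (by omega), st_zero_of_lt k (l+1) (by omega)]; simp

lemma st_col0 : ∀ k : ℕ, stirling1Unsigned (k+1) 0 = 0
  | 0 => by simp [stirling1Unsigned]
  | k+1 => by rw [stirling1Unsigned, st_col0 k]; simp

lemma TT_term (m : ℂ) (θ : ℝ) (a k : ℕ) :
    (-1 : ℂ) ^ (k + a) * (∑ l ∈ Finset.Icc 1 k,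
            cchoose (m + 1) (l + a) * (S1 k l : ℂ) * (bernPoly (l + a) θ : ℂ)) = TT m θ a k := by
  rw [TT, Finset.mul_sum]
  refine Finset.sum_congr rfl fun l _ => ?_
  rw [cc, S1]; push_cast
  have : (-1:ℂ)^(k+a) * (-1)^(k+l) = (-1)^(l+a) := by
    rw [← pow_add, show k + a + (k+l) = 2*k + (l+a) by ring, pow_add, pow_mul]; simp
  rw [← this]; ring

/-- general weighted Stirling sum, all `l` -/
lemma TT_rec (c : ℕ → ℂ) (k : ℕ) :
    ∑ l ∈ Finset.Icc 1 (k+1), c l * (stirling1Unsigned (k+1) l : ℂ) =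
     k * ∑ l ∈ Finset.Icc 1 k, c l * (stirling1Unsigned k l : ℂ)
      + ∑ l ∈ Finset.range (k+1), c (l+1) * (stirling1Unsigned k l : ℂ) := by
  have e : ∀ (n : ℕ) (f : ℕ → ℂ), ∑ l ∈ Finset.Icc 1 n, f l = ∑ l ∈ Finset.range n, f (l+1) := by
    intro n f
    rw [Finset.range_eq_Ico, Finset.sum_Ico_add' f 0 n 1]
    rfl
  rw [e, e]
  have e2 : ∑ l ∈ Finset.range k, c (l+1) * (stirling1Unsigned k (l+1) : ℂ)
     = ∑ l ∈ Finset.range (k+1), c (l+1) * (stirling1Unsigned k (l+1) : ℂ) := by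
    rw [Finset.sum_range_succ, st_zero_of_lt k (k+1) (by omega)]; simp
  rw [e2, Finset.mul_sum, ← Finset.sum_add_distrib]
  refine Finset.sum_congr rfl fun l _ => ?_
  rw [stirling1Unsigned]; push_cast; ring

lemma rp_succ (z : ℂ) (k : ℕ) : risingProd z (k+1) = risingProd z k * (z + k + 1) := by
  rw [risingProd, Finset.prod_range_succ]; rfl

lemma rp_ne (x : ℝ) (hx : 0 < x) (k : ℕ) : risingProd (x:ℂ) k ≠ 0 := by
  rw [risingProd, Finset.prod_ne_zero_iff]
  intro i _
  have : ((x:ℂ)+i+1) = ((x + i + 1 : ℝ):ℂ) := by push_cast; rfl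
  rw [this]; exact_mod_cast (by positivity : x + i + 1 ≠ 0)

/-- The downward step. -/
lemma step_down (m : ℂ) (θ x : ℝ) (hx : 0 < x) (a : ℕ)
    (hS : Summable fun k => ‖TT m θ (a+1) (k+1) / risingProd x (k+1)‖) :
    Summable (fun k => ‖TT m θ a (k+1) / risingProd x (k+1)‖) ∧
    (x:ℂ) * ∑' k, TT m θ a (k+1) / risingProd x (k+1) =
      cc m θ (a+1) + ∑' k, TT m θ (a+1) (k+1) / risingProd x (k+1) := by
  set D : ℕ → ℂ := fun k => (∑ l ∈ Finset.range (k+1), cc m θ (l+1+a) * (stirling1Unsigned k l : ℂ))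
     / risingProd x k with hDdef
  have hD1 : ∀ k, D (k+1) = TT m θ (a+1) (k+1) / risingProd x (k+1) := by
    intro k
    simp only [hDdef, TT]
    congr 1
    rw [Finset.sum_range_succ', st_col0]
    simp only [Nat.cast_zero, mul_zero, add_zero]
    have := Finset.sum_Ico_add' (fun l => cc m θ (l+(a+1)) * (stirling1Unsigned (k+1) l : ℂ)) 0 (k+1) 1
    rw [Finset.range_eq_Ico]
    rw [show Finset.Icc 1 (k+1) = Finset.Ico (0+1) (k+1+1) from rfl, ← this]
    refine Finset.sum_congr rfl fun l _ => ?_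
    rw [show l + 1 + 1 + a = l + 1 + (a+1) by ring]
  have hD0 : D 0 = cc m θ (a+1) := by
    simp [hDdef, stirling1Unsigned, risingProd, add_comm]
  have hDs : Summable fun k => ‖D k‖ := by
    rw [← summable_nat_add_iff 1]
    simpa only [hD1] using hS
  have := L1 x hx (fun k => TT m θ a k / risingProd x k) D (fun k => by
    have hk : ((x:ℂ)+k+1) ≠ 0 := by
      have := rp_ne x hx (k+1); rw [rp_succ] at this; exact right_ne_zero_of_mul this
    have hk2 := rp_ne x hx k
    rw [rp_succ, TT, TT_rec (fun l => cc m θ (l+a))]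
    simp only [hDdef, TT]
    field_simp) hDs
  refine ⟨this.1, ?_⟩
  rw [this.2, hDs.of_norm.tsum_eq_zero_add, hD0]
  simp only [hD1]


noncomputable def rf (v : ℂ) (k : ℕ) : ℂ := ∏ i ∈ Finset.range k, (v + i)

lemma rf_succ (v : ℂ) (k : ℕ) : rf v (k+1) = rf v k * (v + k) := by
  rw [rf, Finset.prod_range_succ]; rfl

lemma rf_eq (v : ℂ) (k : ℕ) :
    rf v (k+1) = ∑ l ∈ Finset.Icc 1 (k+1), v ^ l * (stirling1Unsigned (k+1) l : ℂ) := by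
  induction k with
  | zero => simp [rf, stirling1Unsigned]
  | succ k ih =>
    rw [TT_rec (fun l => v^l) (k+1), ← ih, rf_succ, Finset.sum_range_succ', st_col0]
    have : ∑ l ∈ Finset.range (k+1), v^(l+1+1) * (stirling1Unsigned (k+1) (l+1) : ℂ)
        = v * rf v (k+1) := by
      rw [ih, Finset.mul_sum, show Finset.Icc 1 (k+1) = Finset.Ico (0+1) (k+1+1) from rfl,
        ← Finset.sum_Ico_add', Finset.range_eq_Ico]
      exact Finset.sum_congr rfl fun l _ => by ring
    rw [this]; push_cast; ring

lemma sinh_le (u : ℝ) : Real.sinh u ≤ u * Real.exp u := by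
  rw [Real.sinh_eq]
  have h1 := Real.add_one_le_exp (-(2*u))
  have h2 : Real.exp (-u) = Real.exp u * Real.exp (-(2*u)) := by
    rw [← Real.exp_add]; congr 1; ring
  have h3 := Real.exp_pos u
  rw [h2]; nlinarith

open Filter Topology in
lemma prod_le_aux (τ : ℝ) (hτ : 0 < τ) (n : ℕ) :
    ∏ i ∈ Finset.range n, (1 + τ^2/((i:ℝ)+1)^2) ≤ Real.exp (Real.pi * τ) := by
  have h1 := Complex.tendsto_euler_sin_prod (Complex.I * τ)
  have h2 : Tendsto (fun n : ℕ => Real.pi * τ * ∏ i ∈ Finset.range n, (1 + τ^2/((i:ℝ)+1)^2)) atTop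
      (𝓝 (Real.sinh (Real.pi * τ))) := by
    have e1 : Complex.sin (Real.pi * (Complex.I * τ)) = Complex.I * (Real.sinh (Real.pi * τ) : ℝ) := by
      rw [show (Real.pi:ℂ) * (Complex.I * τ) = (Real.pi * τ) * Complex.I by ring, Complex.sin_mul_I]
      push_cast; ring
    rw [e1] at h1
    have h3 := (Complex.continuous_im.tendsto _).comp h1
    simp only [Complex.mul_im, Complex.I_re, Complex.I_im, Complex.ofReal_re, Complex.ofReal_im] at h3
    simp only [zero_mul, one_mul, zero_add] at h3
    refine h3.congr fun n => ?_
    have : (Real.pi:ℂ) * (Complex.I * τ) * ∏ j ∈ Finset.range n, (1 - (Complex.I * (τ:ℂ))^2/((j:ℂ)+1)^2)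
       = Complex.I * ((Real.pi * τ * ∏ i ∈ Finset.range n, (1 + τ^2/((i:ℝ)+1)^2) : ℝ):ℂ) := by
      push_cast
      have : ∀ j : ℕ, (1 - (Complex.I * (τ:ℂ))^2/((j:ℂ)+1)^2) = 1 + (τ:ℂ)^2/((j:ℂ)+1)^2 := by
        intro j; rw [mul_pow, Complex.I_sq]; ring
      simp only [this]; ring
    simp only [Function.comp]
    rw [this]; simp only [Complex.mul_im, Complex.I_re, Complex.I_im, Complex.ofReal_re, Complex.ofReal_im]; ring
  have hp : 0 < Real.pi * τ := mul_pos Real.pi_pos hτ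
  have hm : Monotone (fun n : ℕ => Real.pi * τ * ∏ i ∈ Finset.range n, (1 + τ^2/((i:ℝ)+1)^2)) := by
    refine monotone_nat_of_le_succ fun n => ?_
    refine mul_le_mul_of_nonneg_left ?_ hp.le
    rw [Finset.prod_range_succ]
    refine le_mul_of_one_le_right (Finset.prod_nonneg fun i _ => by positivity) ?_
    have : 0 ≤ τ^2/((n:ℝ)+1)^2 := by positivity
    linarith
  have h4 := hm.ge_of_tendsto h2 n
  have h5 := h4.trans (sinh_le _)
  exact le_of_mul_le_mul_left h5 hp

lemma prod_le (τ : ℝ) (n : ℕ) :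
    ∏ i ∈ Finset.range n, (1 + τ^2/((i:ℝ)+1)^2) ≤ Real.exp (Real.pi * |τ|) := by
  rcases eq_or_ne τ 0 with rfl | h
  · simp
  · simpa using prod_le_aux |τ| (abs_pos.mpr h) n

lemma rf_bound (τ : ℝ) (k : ℕ) :
    ‖rf (Complex.I * τ) (k+1)‖ ≤ |τ| * Real.exp (Real.pi * |τ| / 2) * k.factorial := by
  have h : ‖rf (Complex.I * τ) (k+1)‖^2 = (|τ| * k.factorial)^2 *
      ∏ i ∈ Finset.range k, (1 + τ^2/((i:ℝ)+1)^2) := by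
    induction k with
    | zero => simp [rf]
    | succ k ih =>
      rw [rf_succ, norm_mul, mul_pow, ih, Finset.prod_range_succ, Nat.factorial_succ]
      have : ‖Complex.I * (τ:ℂ) + ((k+1 : ℕ):ℂ)‖^2 = τ^2 + ((k:ℝ)+1)^2 := by
        rw [Complex.sq_norm, Complex.normSq_apply]
        simp; ring
      rw [this]
      push_cast
      field_simp
      ring
  refine le_of_sq_le_sq (a := ‖rf (Complex.I * τ) (k+1)‖) ?_ (by positivity)
  rw [h, show (|τ| * Real.exp (Real.pi * |τ| / 2) * (k.factorial:ℝ))^2 =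
    (|τ| * k.factorial)^2 * (Real.exp (Real.pi * |τ| / 2))^2 by ring, ← Real.exp_nat_mul]
  refine mul_le_mul_of_nonneg_left ((prod_le τ k).trans_eq ?_) (by positivity)
  congr 1; push_cast; ring

noncomputable def qq (x : ℝ) (k : ℕ) : ℝ := ‖(k.factorial : ℂ) / risingProd x (k+1)‖

lemma qq_summable (x : ℝ) (hx : 0 < x) : Summable (qq x) := by
  have := L1 x hx (fun k => ((k-1).factorial : ℂ) / risingProd x k * (if k = 0 then 0 else 1))
    (fun k => if k = 0 then 1 else 0) (fun k => by
      have h1 : ((x:ℂ)+k+1) ≠ 0 := by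
        have := rp_ne x hx (k+1); rw [rp_succ] at this; exact right_ne_zero_of_mul this
      have hk2 := rp_ne x hx k
      rw [rp_succ]
      rcases k with _ | k
      · simp [risingProd] at *; field_simp
      · simp only [Nat.add_sub_cancel, Nat.add_eq_zero_iff, one_ne_zero, and_false, if_false, Nat.factorial_succ]
        push_cast at *; field_simp; ring) (by
      refine summable_of_ne_finset_zero (s := {0}) fun b hb => ?_
      simp at hb; simp [hb])
  have e : qq x = fun k => (k.factorial:ℝ) / ‖risingProd (x:ℂ) (k+1)‖ := by
    funext k; simp [qq]
  rw [e]
  simpa using this.1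

lemma r_sum (x : ℝ) (hx : 0 < x) (τ : ℝ) :
    HasSum (fun k => rf (Complex.I * τ) (k+1) / risingProd x (k+1))
      ((Complex.I * τ) / (x - Complex.I * τ)) := by
  set v := Complex.I * (τ:ℂ) with hv
  have hs : Summable (fun k => ‖rf v (k+1) / risingProd x (k+1)‖) := by
    refine Summable.of_nonneg_of_le (fun _ => norm_nonneg _) (fun k => ?_)
      ((qq_summable x hx).mul_left (|τ| * Real.exp (Real.pi * |τ| / 2)))
    rw [norm_div, qq, norm_div, ← mul_div_assoc]
    gcongr
    simpa using rf_bound τ k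
  have hD : Summable (fun k => ‖v * (rf v k / risingProd x k)‖) := by
    rw [← summable_nat_add_iff 1]
    simpa only [norm_mul] using hs.mul_left ‖v‖
  have := L1 x hx (fun k => rf v k / risingProd x k) (fun k => v * (rf v k / risingProd x k))
    (fun k => by
      have h1 : ((x:ℂ)+k+1) ≠ 0 := by
        have := rp_ne x hx (k+1); rw [rp_succ] at this; exact right_ne_zero_of_mul this
      have hk2 := rp_ne x hx k
      rw [rp_succ, rf_succ]; field_simp; ring) hD
  have h2 := this.2
  rw [hD.of_norm.tsum_eq_zero_add] at h2
  rw [tsum_mul_left] at h2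
  have hne : (x:ℂ) - v ≠ 0 := by
    intro h
    have := congrArg Complex.re h
    simp [hv] at this; exact hx.ne' this
  have h3 : ∑' k, rf v (k+1) / risingProd x (k+1) = v / (x - v) := by
    rw [eq_div_iff hne]
    simp [rf, risingProd] at h2 ⊢
    linear_combination h2
  rw [← h3]; exact hs.of_norm.hasSum


open MeasureTheory Set in
lemma integ_gam (s : ℂ) (hs : 0 < s.re) (r : ℝ) (hr : 0 < r) :
    IntegrableOn (fun q : ℝ => (q:ℂ)^(s-1) * Complex.exp (-(r*q))) (Ioi 0) := by
  by_contra h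
  have h1 := Complex.integral_cpow_mul_exp_neg_mul_Ioi hs hr
  rw [integral_undef h] at h1
  have : (1/(r:ℂ))^s * Complex.Gamma s ≠ 0 := by
    refine mul_ne_zero ?_ (Complex.Gamma_ne_zero_of_re_pos hs)
    rw [Complex.cpow_ne_zero_iff]; left
    exact one_div_ne_zero (by exact_mod_cast hr.ne')
  exact this h1.symm

open MeasureTheory Set in
lemma integ_gamR (s : ℝ) (hs : 0 < s) (r : ℝ) (hr : 0 < r) :
    IntegrableOn (fun q : ℝ => q^(s-1) * Real.exp (-(r*q))) (Ioi 0) := by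
  by_contra h
  have h1 := Real.integral_rpow_mul_exp_neg_mul_Ioi hs hr
  rw [integral_undef h] at h1
  have : (1/r)^s * Real.Gamma s ≠ 0 := by
    have := Real.Gamma_pos_of_pos hs
    positivity
  exact this h1.symm

lemma Gamma_rf (w : ℂ) (hw : 0 < w.re) (l : ℕ) :
    Complex.Gamma (w + l) = rf w l * Complex.Gamma w := by
  induction l with
  | zero => simp [rf]
  | succ l ih =>
    rw [rf_succ, Nat.cast_succ, ← add_assoc, Complex.Gamma_add_one _ (by
      intro h; have := congrArg Complex.re h; simp at this; 
      have : (0:ℝ) ≤ l := by positivity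
      linarith), ih]; ring

noncomputable def Qk (w z : ℂ) (k : ℕ) : ℂ :=
  ∑ l ∈ Finset.Icc 1 k, rf w l * z⁻¹^l * (stirling1Unsigned k l : ℂ)

open MeasureTheory Set in
lemma Q_int (w z : ℂ) (hw : 0 < w.re) (x : ℝ) (hx : 0 < x) (k : ℕ) :
    IntegrableOn (fun q : ℝ => (q:ℂ)^(w-1) * Complex.exp (-(x*q)) * rf (x*q/z) (k+1)) (Ioi 0) ∧
    ∫ q : ℝ in Ioi 0, (q:ℂ)^(w-1) * Complex.exp (-(x*q)) * rf (x*q/z) (k+1) =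
      (x:ℂ)^(-w) * Complex.Gamma w * Qk w z (k+1) := by
  have hxc : (x:ℂ) ≠ 0 := by exact_mod_cast hx.ne'
  have key : ∀ q ∈ Ioi (0:ℝ), (q:ℂ)^(w-1) * Complex.exp (-(x*q)) * rf (x*q/z) (k+1) =
     ∑ l ∈ Finset.Icc 1 (k+1), ((x/z)^l * (stirling1Unsigned (k+1) l : ℂ)) *
      ((q:ℂ)^(w+l-1) * Complex.exp (-(x*q))) := by
    intro q hq
    have hq' : (q:ℂ) ≠ 0 := by exact_mod_cast (ne_of_gt hq)
    rw [rf_eq, Finset.mul_sum]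
    refine Finset.sum_congr rfl fun l _ => ?_
    rw [show w + l - 1 = (w-1) + l by ring, Complex.cpow_add _ _ hq', Complex.cpow_natCast,
      show (x:ℂ)*q/z = (x/z)*q by ring, mul_pow]
    ring
  have hre : ∀ l : ℕ, 0 < (w + l).re := by
    intro l; simp; positivity
  have hi : ∀ l ∈ Finset.Icc 1 (k+1), IntegrableOn (fun q : ℝ => ((x/z)^l * (stirling1Unsigned (k+1) l : ℂ)) *
      ((q:ℂ)^(w+l-1) * Complex.exp (-(x*q)))) (Ioi 0) := fun l _ =>
    (integ_gam (w+l) (hre l) x hx).const_mul _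
  constructor
  · refine IntegrableOn.congr_fun ?_ (fun q hq => (key q hq).symm) measurableSet_Ioi
    exact integrable_finsetSum _ hi
  · rw [setIntegral_congr_fun measurableSet_Ioi key, integral_finsetSum _ hi, Qk, Finset.mul_sum]
    refine Finset.sum_congr rfl fun l _ => ?_
    rw [integral_const_mul, Complex.integral_cpow_mul_exp_neg_mul_Ioi (hre l) hx, Gamma_rf w hw]
    have : (1/(x:ℂ))^(w+l) = (x:ℂ)^(-w) * ((x:ℂ)⁻¹)^l := by
      rw [Complex.cpow_add _ _ (one_div_ne_zero hxc), Complex.cpow_natCast, one_div,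
        Complex.inv_cpow _ _ (by rw [Complex.arg_ofReal_of_nonneg hx.le]; exact Real.pi_pos.ne), Complex.cpow_neg]
    rw [this, div_pow, inv_pow, inv_pow]
    have := pow_ne_zero l hxc
    field_simp

noncomputable def zj (j : ℤ) : ℂ := 2 * Real.pi * Complex.I * j

noncomputable def GG (w : ℂ) (x : ℝ) : ℝ := ∫ q : ℝ in Set.Ioi 0, x * (q^((w.re+1)-1) * Real.exp (-((3/4*x)*q)))

open MeasureTheory Set in
lemma norm_bound (w : ℂ) (x : ℝ) (hx : 0 < x) (j : ℤ) (hj : j ≠ 0) (k : ℕ) (q : ℝ) (hq : 0 < q) :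
    ‖(q:ℂ)^(w-1) * Complex.exp (-(x*q)) * rf (x*q/zj j) (k+1)‖ ≤
     (k.factorial:ℝ) * (x * (q^((w.re+1)-1) * Real.exp (-((3/4*x)*q)))) := by
  have hjc : (j:ℂ) ≠ 0 := by exact_mod_cast hj
  have hjr : (j:ℝ) ≠ 0 := by exact_mod_cast hj
  have hj1 : (1:ℝ) ≤ |(j:ℝ)| := by
    have := Int.one_le_abs hj
    exact_mod_cast this
  have hpi := Real.pi_pos
  have hpi3 := Real.pi_gt_three
  set τ : ℝ := -(x*q/(2*Real.pi*j)) with hτ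
  have e : (x:ℂ)*q/zj j = Complex.I * τ := by
    rw [hτ, zj]; push_cast
    have : (Real.pi:ℂ) ≠ 0 := by exact_mod_cast hpi.ne'
    field_simp; rw [Complex.I_sq]; ring
  have hτb : |τ| ≤ x*q/(2*Real.pi) := by
    rw [hτ, abs_neg, abs_div, abs_mul (2*Real.pi), abs_of_pos (mul_pos hx hq), abs_of_pos (by positivity : 0 < 2*Real.pi)]
    apply div_le_div_of_nonneg_left (by positivity) (by positivity)
    exact le_mul_of_one_le_right (by positivity) hj1
  rw [norm_mul, norm_mul, e, Complex.norm_cpow_eq_rpow_re_of_pos hq]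
  have e2 : ‖Complex.exp (-((x:ℂ)*q))‖ = Real.exp (-(x*q)) := by
    rw [Complex.norm_exp]; simp
  rw [e2]
  have h1 := rf_bound τ k
  have h2 : |τ| ≤ x * q := hτb.trans (div_le_self (by positivity) (by linarith))
  have h3 : Real.exp (Real.pi * |τ|/2) ≤ Real.exp (x*q/4) := by
    apply Real.exp_le_exp.mpr
    have : Real.pi * |τ| ≤ Real.pi * (x*q/(2*Real.pi)) := by gcongr
    have e3 : Real.pi * (x*q/(2*Real.pi)) = x*q/2 := by field_simp
    linarith
  have h4 : ‖rf (Complex.I * τ) (k+1)‖ ≤ (x*q) * Real.exp (x*q/4) * k.factorial := by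
    refine h1.trans ?_
    gcongr
  calc _ ≤ q ^ (w-1).re * Real.exp (-(x*q)) * ((x*q) * Real.exp (x*q/4) * k.factorial) := by gcongr
    _ = _ := by
      have e5 : Real.exp (-((3/4*x)*q)) = Real.exp (-(x*q)) * Real.exp (x*q/4) := by
        rw [← Real.exp_add]; congr 1; ring
      have e6 : q ^ ((w.re+1)-1) = q ^ (w-1).re * q := by
        rw [← Real.rpow_add_one hq.ne']; simp
      rw [e5, e6]; ring

open MeasureTheory Set in
lemma GG_int (w : ℂ) (hw : 0 < w.re) (x : ℝ) (hx : 0 < x) :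
    IntegrableOn (fun q : ℝ => x * (q^((w.re+1)-1) * Real.exp (-((3/4*x)*q)))) (Ioi 0) :=
  (integ_gamR (w.re+1) (by linarith) (3/4*x) (by positivity)).const_mul x

open MeasureTheory Set in
lemma Q_bound (w : ℂ) (hw : 0 < w.re) (x : ℝ) (hx : 0 < x) (j : ℤ) (hj : j ≠ 0) (k : ℕ) :
    ∫ q : ℝ in Ioi 0, ‖(q:ℂ)^(w-1) * Complex.exp (-(x*q)) * rf (x*q/zj j) (k+1)‖ ≤ k.factorial * GG w x := by
  rw [GG, ← integral_const_mul]
  refine setIntegral_mono_on (Q_int w (zj j) hw x hx k).1.norm ((GG_int w hw x hx).const_mul _)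
    measurableSet_Ioi fun q hq => norm_bound w x hx j hj k q hq

lemma Q_norm (w : ℂ) (hw : 0 < w.re) (x : ℝ) (hx : 0 < x) (j : ℤ) (hj : j ≠ 0) (k : ℕ) :
    ‖Qk w (zj j) (k+1)‖ ≤ (GG w x / ‖(x:ℂ)^(-w) * Complex.Gamma w‖) * k.factorial := by
  have hne : (x:ℂ)^(-w) * Complex.Gamma w ≠ 0 := by
    refine mul_ne_zero ?_ (Complex.Gamma_ne_zero_of_re_pos hw)
    rw [Complex.cpow_ne_zero_iff]; left
    exact_mod_cast hx.ne'
  have h := Q_bound w hw x hx j hj k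
  have h2 := MeasureTheory.norm_integral_le_integral_norm (μ := MeasureTheory.volume.restrict (Set.Ioi (0:ℝ)))
    (fun q : ℝ => (q:ℂ)^(w-1) * Complex.exp (-(x*q)) * rf (x*q/zj j) (k+1))
  rw [(Q_int w (zj j) hw x hx k).2, norm_mul] at h2
  rw [div_mul_eq_mul_div, le_div_iff₀ (norm_pos_iff.mpr hne)]
  linarith

open MeasureTheory Set in
lemma Q_hasSum (w : ℂ) (hw : 0 < w.re) (x : ℝ) (hx : 0 < x) (j : ℤ) (hj : j ≠ 0) :
    HasSum (fun k => (x:ℂ)^(-w) * Complex.Gamma w * Qk w (zj j) (k+1) / risingProd x (k+1))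
     (∫ q : ℝ in Ioi 0, (q:ℂ)^w * Complex.exp (-(x*q)) / (zj j - q)) := by
  have hjc : (j:ℂ) ≠ 0 := by exact_mod_cast hj
  have hpc : (Real.pi:ℂ) ≠ 0 := by exact_mod_cast Real.pi_pos.ne'
  have hxc : (x:ℂ) ≠ 0 := by exact_mod_cast hx.ne'
  have hz : zj j ≠ 0 := by simp [zj, hj, Real.pi_ne_zero]
  have := hasSum_integral_of_summable_integral_norm
    (μ := volume.restrict (Ioi (0:ℝ)))
    (F := fun (k:ℕ) (q : ℝ) => (q:ℂ)^(w-1) * Complex.exp (-(x*q)) * rf (x*q/zj j) (k+1) / risingProd x (k+1))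
    (fun k => (Q_int w (zj j) hw x hx k).1.div_const _) (by
      refine Summable.of_nonneg_of_le (fun k => integral_nonneg fun _ => norm_nonneg _) (fun k => ?_)
        ((qq_summable x hx).mul_left (GG w x))
      simp only [norm_div]
      rw [integral_div, qq, norm_div, mul_div_assoc']
      gcongr
      simpa [mul_comm] using Q_bound w hw x hx j hj k)
  have hA : (fun k => (x:ℂ)^(-w) * Complex.Gamma w * Qk w (zj j) (k+1) / risingProd x (k+1)) = fun k : ℕ =>
      ∫ q : ℝ in Ioi 0, (q:ℂ)^(w-1) * Complex.exp (-(x*q)) * rf (x*q/zj j) (k+1) / risingProd x (k+1) := by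
    funext k
    rw [integral_div, (Q_int w (zj j) hw x hx k).2]
  have hB : (∫ q : ℝ in Ioi 0, (q:ℂ)^w * Complex.exp (-(x*q)) / (zj j - q)) = ∫ q : ℝ in Ioi 0,
      ∑' k : ℕ, (q:ℂ)^(w-1) * Complex.exp (-(x*q)) * rf (x*q/zj j) (k+1) / risingProd x (k+1) := by
    refine setIntegral_congr_fun measurableSet_Ioi fun q hq => ?_
    have hq' : (q:ℂ) ≠ 0 := by exact_mod_cast (ne_of_gt hq)
    have e : (x:ℂ)*q/zj j = Complex.I * ((-(x*q/(2*Real.pi*j)) : ℝ):ℂ) := by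
      rw [zj]; push_cast
      field_simp; rw [Complex.I_sq]; ring
    have h1 := (r_sum x hx (-(x*q/(2*Real.pi*j)))).mul_left ((q:ℂ)^(w-1) * Complex.exp (-(x*q)))
    rw [← e] at h1
    have h2 := h1.tsum_eq
    simp only [mul_div_assoc'] at h2
    rw [h2]
    have hzq : zj j - q ≠ 0 := by
      intro h
      have := congrArg Complex.re h
      simp [zj] at this
      exact (ne_of_gt hq) this
    have hd : (x:ℂ) - x*q/zj j = x * (zj j - q) / zj j := by field_simp
    rw [hd, show w = (w-1)+1 by ring, Complex.cpow_add _ _ hq', Complex.cpow_one]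
    simp only [add_sub_cancel_right]
    field_simp
  rw [hA, hB]
  exact this


open MeasureTheory Set in
lemma fub (w z : ℂ) (hw : 0 < w.re) (hz : z.re = 0) (x : ℝ) (hx : 0 < x) :
    ∫ q : ℝ in Ioi 0, (q:ℂ)^w * Complex.exp (-(x*q)) / (z - q) =
     -Complex.Gamma (w+1) * Complex.exp (-(z*x)) * ∫ t : ℝ in Ioi x, Complex.exp (z*t) * (t:ℂ)^(-(w+1)) := by
  set f : ℝ → ℝ → ℂ := fun t q => Complex.exp (z*t) * ((q:ℂ)^((w+1)-1) * Complex.exp (-(t*q))) with hf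
  have hw1 : 0 < (w+1).re := by simp; linarith
  have hmeas : AEStronglyMeasurable (Function.uncurry f) ((volume.restrict (Ioi x)).prod (volume.restrict (Ioi 0))) := by
    rw [Measure.prod_restrict]
    refine ContinuousOn.aestronglyMeasurable ?_ (measurableSet_Ioi.prod measurableSet_Ioi)
    intro p hp
    have hp2 : 0 < p.2 := hp.2
    simp only [hf, Function.uncurry_def]
    refine ContinuousAt.continuousWithinAt ?_
    refine ContinuousAt.mul (by fun_prop) (ContinuousAt.mul ?_ (by fun_prop))
    refine ContinuousAt.cpow (by fun_prop) (by fun_prop) ?_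
    left; simpa using hp2
  have hnorm : ∀ t ∈ Ioi x, ∫ q : ℝ in Ioi 0, ‖f t q‖ = (1/t)^(w.re+1) * Real.Gamma (w.re+1) := by
    intro t ht
    have ht0 : 0 < t := hx.trans ht
    rw [← Real.integral_rpow_mul_exp_neg_mul_Ioi (by linarith : 0 < w.re+1) ht0]
    refine setIntegral_congr_fun measurableSet_Ioi fun q hq => ?_
    simp only [hf]
    rw [norm_mul, norm_mul, Complex.norm_cpow_eq_rpow_re_of_pos hq, Complex.norm_exp, Complex.norm_exp]
    simp [hz]
  have hint : Integrable (Function.uncurry f) ((volume.restrict (Ioi x)).prod (volume.restrict (Ioi 0))) := by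
    rw [integrable_prod_iff hmeas]
    constructor
    · filter_upwards [ae_restrict_mem measurableSet_Ioi] with t ht
      have := (integ_gam (w+1) hw1 t (hx.trans ht)).const_mul (Complex.exp (z*t))
      exact this
    · have : IntegrableOn (fun t : ℝ => t^(-(w.re+1)) * Real.Gamma (w.re+1)) (Ioi x) :=
        (integrableOn_Ioi_rpow_of_lt (by linarith) hx).mul_const _
      refine IntegrableOn.congr_fun this (fun t ht => ?_) measurableSet_Ioi
      have ht0 : 0 < t := hx.trans ht
      simp only [Function.uncurry]
      rw [hnorm t ht, one_div, Real.inv_rpow ht0.le, Real.rpow_neg ht0.le]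
  have hswap := integral_integral_swap hint
  have hL : ∫ t : ℝ in Ioi x, ∫ q : ℝ in Ioi 0, f t q =
      Complex.Gamma (w+1) * ∫ t : ℝ in Ioi x, Complex.exp (z*t) * (t:ℂ)^(-(w+1)) := by
    rw [← integral_const_mul]
    refine setIntegral_congr_fun measurableSet_Ioi fun t ht => ?_
    have ht0 : 0 < t := hx.trans ht
    simp only [hf]
    rw [integral_const_mul, Complex.integral_cpow_mul_exp_neg_mul_Ioi hw1 ht0, one_div,
        Complex.inv_cpow _ _ (by rw [Complex.arg_ofReal_of_nonneg ht0.le]; exact Real.pi_pos.ne), Complex.cpow_neg]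
    ring
  have hR : ∫ q : ℝ in Ioi 0, ∫ t : ℝ in Ioi x, f t q = -Complex.exp (z*x) *
      ∫ q : ℝ in Ioi 0, (q:ℂ)^w * Complex.exp (-(x*q)) / (z - q) := by
    rw [← integral_const_mul]
    refine setIntegral_congr_fun measurableSet_Ioi fun q hq => ?_
    have e : ∀ t : ℝ, f t q = (q:ℂ)^w * Complex.exp ((z - q) * t) := by
      intro t
      simp only [hf]
      rw [add_sub_cancel_right, show (z - q) * (t:ℂ) = z*t + -(t*q) by ring, Complex.exp_add]; ring
    simp only [e]
    rw [integral_const_mul, integral_exp_mul_complex_Ioi (by simpa [hz] using hq),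
       show (z - q) * (x:ℂ) = z*x + -(x*q) by ring, Complex.exp_add]
    ring
  rw [hL, hR] at hswap
  have he : Complex.exp (-(z*x)) * Complex.exp (z*x) = 1 := by rw [← Complex.exp_add]; simp
  linear_combination (Complex.exp (-(z*x))) * hswap - (∫ q : ℝ in Ioi 0, (q:ℂ)^w * Complex.exp (-(x*q)) / (z - q)) * he

lemma bernPoly_eq (n : ℕ) (x : ℝ) : bernPoly n x = bernoulliFun n x := by
  rw [bernPoly, bernoulliFun, Polynomial.bernoulli, Polynomial.map_sum, Polynomial.eval_finsetSum]
  refine Finset.sum_congr rfl fun i _ => ?_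
  simp [Polynomial.map_monomial, Polynomial.eval_monomial]
  left; ring

lemma exp_fract (j : ℤ) (t : ℝ) : Complex.exp (zj j * (Int.fract t : ℝ)) = Complex.exp (zj j * t) := by
  rw [Complex.exp_eq_exp_iff_exists_int]
  refine ⟨-(j * ⌊t⌋), ?_⟩
  rw [Int.fract, zj]; push_cast; ring

open Set in
lemma four (n : ℕ) (hn : 2 ≤ n) (t : ℝ) :
    HasSum (fun j : ℤ => Complex.exp (zj j * t) / (zj j)^n) (-(bernPoly n (Int.fract t) : ℂ) / n.factorial) := by
  have h := hasSum_one_div_pow_mul_fourier_mul_bernoulliFun hn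
    (x := Int.fract t) ⟨Int.fract_nonneg t, (Int.fract_lt_one t).le⟩
  have h2 := h.mul_left (1/(2 * Real.pi * Complex.I)^n)
  have hne : (2 * Real.pi * Complex.I)^n ≠ 0 := by simp [Real.pi_ne_zero]
  have hA : (fun j : ℤ => Complex.exp (zj j * t) / (zj j)^n) = fun j : ℤ =>
     1/(2 * Real.pi * Complex.I)^n * (1 / (j : ℂ) ^ n * fourier j ((Int.fract t : ℝ) : UnitAddCircle)) := by
    funext j
    rw [fourier_coe_apply, ← exp_fract, zj, mul_pow]
    rw [show (2 * Real.pi * Complex.I * j * (Int.fract t : ℝ) / (1:ℝ) : ℂ) = 2 * Real.pi * Complex.I * j * (Int.fract t : ℝ) by simp]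
    ring
  rw [hA, show -(bernPoly n (Int.fract t) : ℂ) / n.factorial = 1/(2 * Real.pi * Complex.I)^n *
    (-(2 * Real.pi * Complex.I) ^ n / n.factorial * bernoulliFun n (Int.fract t)) by
      rw [bernPoly_eq]; field_simp]
  exact h2

lemma zj_summable (n : ℕ) (hn : 2 ≤ n) : Summable (fun j : ℤ => ‖1 / (zj j)^n‖) := by
  have h := (four n hn 0).summable.norm
  simpa using h

lemma rf_add (v : ℂ) (a l : ℕ) : rf v (l+a) = rf v a * rf (v+a) l := by
  induction l with
  | zero => simp [rf]
  | succ l ih => rw [show l+1+a = (l+a)+1 by ring, rf_succ, ih, rf_succ]; push_cast; ring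

lemma cc_eq (m : ℂ) (θ : ℝ) (n : ℕ) : cc m θ n = rf (-m-1) n * ((bernPoly n θ : ℂ) / n.factorial) := by
  rw [cc, cchoose, rf]
  have : ∏ i ∈ Finset.range n, (-m-1 + (i:ℂ)) = (-1)^n * ∏ i ∈ Finset.range n, (m + 1 - (i:ℂ)) := by
    rw [← Finset.card_range n, ← Finset.prod_const, Finset.card_range, ← Finset.prod_mul_distrib]
    exact Finset.prod_congr rfl fun i _ => by ring
  rw [this]; ring


lemma hs_congr {ι : Type} {f g : ι → ℂ} {a b : ℂ} (h : HasSum f a) (hf : ∀ i, g i = f i) (hb : b = a) :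
    HasSum g b := by
  have : g = f := funext hf
  rw [this, hb]; exact h

noncomputable def EE (m : ℂ) (x : ℝ) (a : ℕ) (j : ℤ) : ℂ :=
  -rf (-m-1) a * Complex.exp (zj j * x) / (zj j)^a

lemma TT_four (m : ℂ) (x : ℝ) (a : ℕ) (ha : 2 ≤ a) (k : ℕ) :
    HasSum (fun j : ℤ => EE m x a j * Qk (-m-1+a) (zj j) k) (TT m (Int.fract x) a k) := by
  have h : ∀ l ∈ Finset.Icc 1 k, HasSum (fun j : ℤ => -rf (-m-1) a * rf (-m-1+a) l * (stirling1Unsigned k l : ℂ) *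
      (Complex.exp (zj j * x) / (zj j)^(l+a))) (cc m (Int.fract x) (l+a) * (stirling1Unsigned k l : ℂ)) := by
    intro l _
    have h1 := (four (l+a) (by omega) x).mul_left (-rf (-m-1) a * rf (-m-1+a) l * (stirling1Unsigned k l : ℂ))
    refine hs_congr h1 (fun _ => rfl) ?_
    rw [cc_eq, rf_add]; ring
  have h2 := hasSum_sum h
  rw [TT]
  convert h2 using 1
  funext j
  rw [Qk, Finset.mul_sum]
  refine Finset.sum_congr rfl fun l _ => ?_
  rw [EE, pow_add, inv_pow]
  rw [div_eq_mul_inv, div_eq_mul_inv, mul_inv]; ring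

lemma Q_val (w : ℂ) (hw : 0 < w.re) (x : ℝ) (hx : 0 < x) (j : ℤ) (hj : j ≠ 0) :
    HasSum (fun k => Qk w (zj j) (k+1) / risingProd x (k+1))
     (-w * (x:ℂ)^w * Complex.exp (-(zj j * x)) *
       ∫ t : ℝ in Set.Ioi x, Complex.exp (zj j*t) * (t:ℂ)^(-(w+1))) := by
  have hG := Complex.Gamma_ne_zero_of_re_pos hw
  have hw0 : w ≠ 0 := by rintro rfl; simp at hw
  have hxc : (x:ℂ) ≠ 0 := by exact_mod_cast hx.ne'
  have hxw : (x:ℂ)^w ≠ 0 := by rw [Complex.cpow_ne_zero_iff]; left; exact hxc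
  have h := (Q_hasSum w hw x hx j hj).mul_left ((x:ℂ)^w / Complex.Gamma w)
  rw [fub w (zj j) hw (by simp [zj]) x hx, Complex.Gamma_add_one w hw0] at h
  refine hs_congr h (fun k => ?_) ?_
  · rw [Complex.cpow_neg]
    field_simp
  · field_simp

lemma EE_norm (m : ℂ) (x : ℝ) (a : ℕ) (j : ℤ) : ‖EE m x a j‖ = ‖rf (-m-1) a‖ * ‖1/(zj j)^a‖ := by
  have : ‖Complex.exp (zj j * x)‖ = 1 := by
    rw [Complex.norm_exp]; simp [zj]
  rw [EE, norm_div, norm_mul, this, norm_div, norm_neg]; simp [div_eq_mul_inv]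

lemma EE_zero (m : ℂ) (x : ℝ) (a : ℕ) (ha : 2 ≤ a) : EE m x a 0 = 0 := by
  have : a ≠ 0 := by omega
  simp [EE, zj, this]

lemma ff_bound (m : ℂ) (x : ℝ) (hx : 0 < x) (a : ℕ) (ha : 2 ≤ a) (hw : 0 < (-m-1+a : ℂ).re) (j : ℤ) (k : ℕ) :
    ‖EE m x a j * (Qk (-m-1+a) (zj j) (k+1) / risingProd x (k+1))‖ ≤
      (‖rf (-m-1) a‖ * ‖1/(zj j)^a‖ * (GG (-m-1+a) x / ‖(x:ℂ)^(-(-m-1+a:ℂ)) * Complex.Gamma (-m-1+a)‖)) * qq x k := by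
  rcases eq_or_ne j 0 with rfl | hj
  · rw [EE_zero m x a ha]
    have : a ≠ 0 := by omega
    simp [zj, this]
  · have h := Q_norm _ hw x hx j hj k
    rw [norm_mul, EE_norm, norm_div (Qk _ _ _), qq, norm_div (k.factorial : ℂ), mul_assoc (_ * _) (_ / _) (_ / _)]
    refine mul_le_mul_of_nonneg_left ?_ (by positivity)
    rw [← mul_div_assoc, Complex.norm_natCast]
    gcongr

open MeasureTheory Set in
lemma int_swap (m : ℂ) (x : ℝ) (hx : 0 < x) (a : ℕ) (ha : 2 ≤ a) (hw : 0 < (-m-1+a : ℂ).re) :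
    HasSum (fun j : ℤ => ∫ t : ℝ in Ioi x, Complex.exp (zj j*t) / (zj j)^a * (t:ℂ)^(m-a))
      (∫ t : ℝ in Ioi x, (-(bernPoly a (Int.fract t) : ℂ) / a.factorial) * (t:ℂ)^(m-a)) := by
  have hre : (m - a).re < -1 := by simp at hw ⊢; linarith
  have hI : IntegrableOn (fun t : ℝ => (t:ℂ)^(m-a)) (Ioi x) := integrableOn_Ioi_cpow_of_lt hre hx
  have hn : ∀ j : ℤ, ∀ t : ℝ, ‖Complex.exp (zj j*t) / (zj j)^a * (t:ℂ)^(m-a)‖ = ‖1/(zj j)^a‖ * ‖(t:ℂ)^(m-a)‖ := by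
    intro j t
    have : ‖Complex.exp (zj j * t)‖ = 1 := by
      rw [Complex.norm_exp]; simp [zj]
    rw [norm_mul, norm_div, norm_div, this, norm_one]
  have hint : ∀ j : ℤ, Integrable (fun t : ℝ => Complex.exp (zj j*t) / (zj j)^a * (t:ℂ)^(m-a)) (volume.restrict (Ioi x)) := by
    intro j
    refine (hI.norm.const_mul ‖1/(zj j)^a‖).mono' ?_ (Filter.Eventually.of_forall fun t => (hn j t).le)
    refine AEStronglyMeasurable.mul ?_ hI.aestronglyMeasurable
    exact Continuous.aestronglyMeasurable (by fun_prop)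
  have hsum : Summable fun j : ℤ => ∫ t : ℝ in Ioi x, ‖Complex.exp (zj j*t) / (zj j)^a * (t:ℂ)^(m-a)‖ := by
    simp only [hn, integral_const_mul]
    exact (zj_summable a ha).mul_right _
  have h := hasSum_integral_of_summable_integral_norm hint hsum
  refine hs_congr h (fun _ => rfl) ?_
  refine integral_congr_ae (Filter.Eventually.of_forall fun t => ?_)
  exact ((four a ha t).mul_right _).tsum_eq.symm

lemma large_a (m : ℂ) (x : ℝ) (hx : 0 < x) (a : ℕ) (ha : 2 ≤ a) (hw : 0 < (-m-1+a : ℂ).re) :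
    Summable (fun k => ‖TT m (Int.fract x) a (k+1) / risingProd x (k+1)‖) ∧
    ∑' k, TT m (Int.fract x) a (k+1) / risingProd x (k+1) =
      -rf (-m-1) (a+1) * (x:ℂ)^(-m-1+a) / a.factorial *
        ∫ t : ℝ in Set.Ioi x, (bernPoly a (Int.fract t) : ℂ) * (t:ℂ)^(m-a) := by
  set w : ℂ := -m-1+a with hwdef
  set f : ℤ → ℕ → ℂ := fun j k => EE m x a j * (Qk w (zj j) (k+1) / risingProd x (k+1)) with hf
  have hS : Summable (fun p : ℤ × ℕ => ‖f p.1 p.2‖) := by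
    have h1 : Summable fun j : ℤ => (‖rf (-m-1) a‖ * ‖1/(zj j)^a‖ * (GG w x / ‖(x:ℂ)^(-w) * Complex.Gamma w‖)) :=
      ((zj_summable a ha).mul_left ‖rf (-m-1) a‖).mul_right _
    have h1n : Summable (fun j : ℤ => ‖(‖rf (-m-1) a‖ * ‖1/(zj j)^a‖ * (GG w x / ‖(x:ℂ)^(-w) * Complex.Gamma w‖))‖) := h1.norm
    have h2 : Summable (fun k => ‖qq x k‖) := (qq_summable x hx).norm
    have h3 := Summable.mul_of_nonneg h1n h2 (fun _ => norm_nonneg _) (fun _ => norm_nonneg _)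
    refine h3.of_nonneg_of_le (fun _ => norm_nonneg _) fun p => ?_
    refine (ff_bound m x hx a ha hw p.1 p.2).trans ?_
    exact (le_abs_self _).trans (abs_mul _ _).le
  have hTT : ∀ k, HasSum (fun j => f j k) (TT m (Int.fract x) a (k+1) / risingProd x (k+1)) := by
    intro k
    have := (TT_four m x a ha (k+1)).div_const (risingProd x (k+1))
    refine hs_congr this (fun j => ?_) rfl
    simp only [hf]; rw [mul_div_assoc]
  have hS' : Summable (fun p : ℕ × ℤ => ‖f p.2 p.1‖) := (Equiv.prodComm ℕ ℤ).summable_iff.mpr hS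
  constructor
  · have h := hS'.prod
    refine h.of_nonneg_of_le (fun _ => norm_nonneg _) fun k => ?_
    rw [← (hTT k).tsum_eq]
    exact norm_tsum_le_tsum_norm (hS'.prod_factor k)
  · have h1 : ∑' k, TT m (Int.fract x) a (k+1) / risingProd x (k+1) = ∑' k, ∑' j, f j k :=
      tsum_congr fun k => (hTT k).tsum_eq.symm
    have h2 : ∑' k, ∑' j, f j k = ∑' j, ∑' k, f j k := by
      refine Summable.tsum_comm (f := f) ?_
      exact hS.of_norm
    have h3 : ∀ j, ∑' k, f j k = (rf (-m-1) (a+1) * (x:ℂ)^w) *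
        ∫ t : ℝ in Set.Ioi x, Complex.exp (zj j*t) / (zj j)^a * (t:ℂ)^(m-a) := by
      intro j
      rcases eq_or_ne j 0 with rfl | hj
      · have : a ≠ 0 := by omega
        simp [hf, EE_zero m x a ha, zj, this]
      · simp only [hf]
        rw [((Q_val w hw x hx j hj).mul_left _).tsum_eq]
        have e : ∫ t : ℝ in Set.Ioi x, Complex.exp (zj j*t) / (zj j)^a * (t:ℂ)^(m-a)
          = 1/(zj j)^a * ∫ t : ℝ in Set.Ioi x, Complex.exp (zj j*t) * (t:ℂ)^(-(w+1)) := by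
          rw [← MeasureTheory.integral_const_mul]
          congr 1; funext t
          rw [show -(w+1) = m - a by rw [hwdef]; ring]; ring
        rw [e, EE, rf_succ]
        have he : Complex.exp (zj j*x) * Complex.exp (-(zj j*x)) = 1 := by rw [← Complex.exp_add]; simp
        rw [← hwdef]
        linear_combination (rf (-m-1) a * 1/(zj j)^a * w * (x:ℂ)^w *
          ∫ t : ℝ in Set.Ioi x, Complex.exp (zj j*t) * (t:ℂ)^(-(w+1))) * he
    rw [h1, h2, tsum_congr h3, tsum_mul_left, (int_swap m x hx a ha hw).tsum_eq]
    have e2 : ∫ t : ℝ in Set.Ioi x, (-(bernPoly a (Int.fract t) : ℂ) / a.factorial) * (t:ℂ)^(m-a) =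
       (-1/a.factorial) * ∫ t : ℝ in Set.Ioi x, (bernPoly a (Int.fract t) : ℂ) * (t:ℂ)^(m-a) := by
      rw [← MeasureTheory.integral_const_mul]
      congr 1; funext t; ring
    rw [e2]; ring


lemma bern_bdd (a : ℕ) : ∃ C : ℝ, ∀ t : ℝ, ‖(bernPoly a (Int.fract t) : ℂ)‖ ≤ C := by
  obtain ⟨C, hC⟩ := (isCompact_Icc (a := (0:ℝ)) (b := 1)).exists_bound_of_continuousOn
    (continuous_bernoulliFun a).continuousOn
  refine ⟨C, fun t => ?_⟩
  rw [bernPoly_eq, Complex.norm_real]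
  exact hC _ ⟨Int.fract_nonneg t, (Int.fract_lt_one t).le⟩

lemma bern_meas (a : ℕ) : Measurable (fun t : ℝ => (bernPoly a (Int.fract t) : ℂ)) := by
  simp only [bernPoly_eq]
  exact Complex.measurable_ofReal.comp ((continuous_bernoulliFun a).measurable.comp measurable_fract)

open MeasureTheory Set in
lemma bern_int (a : ℕ) (s : ℂ) (hs : s.re < -1) (x : ℝ) (hx : 0 < x) :
    IntegrableOn (fun t : ℝ => (bernPoly a (Int.fract t) : ℂ) * (t:ℂ)^s) (Ioi x) := by
  obtain ⟨C, hC⟩ := bern_bdd a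
  have hI : IntegrableOn (fun t : ℝ => (t:ℂ)^s) (Ioi x) := integrableOn_Ioi_cpow_of_lt hs hx
  exact Integrable.bdd_mul hI (bern_meas a).aestronglyMeasurable (Filter.Eventually.of_forall hC)

lemma bern_cont (a : ℕ) (ha : a ≠ 1) : Continuous (fun t : ℝ => bernPoly a (Int.fract t)) := by
  have h := ContinuousOn.comp_fract'' (f := bernoulliFun a) (continuous_bernoulliFun a).continuousOn
    (bernoulliFun_endpoints_eq_of_ne_one ha).symm
  convert h using 1
  funext t
  rw [bernPoly_eq]; rfl

lemma bern_deriv (a : ℕ) (t : ℝ) :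
    HasDerivWithinAt (fun t : ℝ => (bernPoly (a+1) (Int.fract t) : ℂ)) ((a+1) * bernPoly a (Int.fract t)) (Set.Ioi t) t := by
  have h := ((hasDerivAt_bernoulliFun (a+1) (t - ⌊t⌋)).comp t ((hasDerivAt_id t).sub_const _)).ofReal_comp
  have h2 := h.hasDerivWithinAt (s := Set.Ioi t)
  have e : (((a+1 : ℕ) * bernoulliFun (a + 1 - 1) (t - ⌊t⌋) * 1 : ℝ) : ℂ) = ((a+1) * bernPoly a (Int.fract t)) := by
    rw [bernPoly_eq, Int.fract]; push_cast; simp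
  rw [e] at h2
  refine h2.congr_of_eventuallyEq ?_ ?_
  · have : ∀ᶠ y in nhdsWithin t (Set.Ioi t), y < (⌊t⌋ : ℝ) + 1 :=
      nhdsWithin_le_nhds (eventually_lt_nhds (Int.lt_floor_add_one t))
    filter_upwards [this, self_mem_nhdsWithin] with y hy hy2
    have hf : ⌊y⌋ = ⌊t⌋ := by
      rw [Int.floor_eq_iff]; exact ⟨(Int.floor_le t).trans (le_of_lt hy2), hy⟩
    simp only [bernPoly_eq, Int.fract, hf, Function.comp, id]
  · simp only [bernPoly_eq, Int.fract, Function.comp, id]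

open MeasureTheory Set in
noncomputable def JJ (a : ℕ) (m : ℂ) (x : ℝ) : ℂ := ∫ t : ℝ in Ioi x, (bernPoly a (Int.fract t) : ℂ) * (t:ℂ)^(m-a)

open MeasureTheory Set Filter Topology in
lemma JJ_step (a : ℕ) (ha : 1 ≤ a) (m : ℂ) (hm : m.re < a - 1) (x : ℝ) (hx : 0 < x) :
    (a+1) * JJ a m x = -(bernPoly (a+1) (Int.fract x) * (x:ℂ)^(m-a)) - (m-a) * JJ (a+1) m x := by
  set g : ℝ → ℂ := fun t => (bernPoly (a+1) (Int.fract t) : ℂ) * (t:ℂ)^(m-a) with hg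
  set g' : ℝ → ℂ := fun t => (a+1) * ((bernPoly a (Int.fract t) : ℂ) * (t:ℂ)^(m-a)) +
     (m-a) * ((bernPoly (a+1) (Int.fract t) : ℂ) * (t:ℂ)^(m-(a+1:ℕ))) with hg'
  have i1 := bern_int a (m-a) (by simp; linarith) x hx
  have i2 := bern_int (a+1) (m-(a+1:ℕ)) (by simp; linarith) x hx
  have hI : IntegrableOn g' (Ioi x) := (i1.const_mul _).add (i2.const_mul _)
  have hmain : ∀ R, x ≤ R → ∫ t in x..R, g' t = g R - g x := by
    intro R hR
    refine intervalIntegral.integral_eq_sub_of_hasDeriv_right ?_ ?_ ?_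
    · rw [uIcc_of_le hR]
      refine ContinuousOn.mul ?_ ?_
      · exact (Complex.continuous_ofReal.comp (bern_cont (a+1) (by omega))).continuousOn
      · intro t ht
        refine ContinuousAt.continuousWithinAt ?_
        exact Complex.continuousAt_ofReal_cpow_const _ _ (Or.inr (hx.trans_le ht.1).ne')
    · intro t ht
      rw [min_eq_left hR] at ht
      have ht0 : 0 < t := hx.trans ht.1
      have hma : m - a ≠ 0 := by
        intro h
        have := congrArg Complex.re h
        simp at this; linarith
      have h2 := (hasDerivAt_ofReal_cpow_const ht0.ne' hma).hasDerivWithinAt (s := Ioi t)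
      have h3 := (bern_deriv a t).mul h2
      refine h3.congr_deriv ?_
      rw [hg']
      have e3 : (m - (a+1:ℕ) : ℂ) = m - a - 1 := by push_cast; ring
      simp only [e3]
      ring
    · rw [intervalIntegrable_iff_integrableOn_Ioc_of_le hR]
      exact hI.mono_set Ioc_subset_Ioi_self
  have hlim1 := intervalIntegral_tendsto_integral_Ioi x hI tendsto_id
  have hlim2 : Tendsto (fun R => g R - g x) atTop (𝓝 (0 - g x)) := by
    refine Tendsto.sub_const ?_ _
    obtain ⟨C, hC⟩ := bern_bdd (a+1)
    refine squeeze_zero_norm' (a := fun t : ℝ => C * t^(m.re-a)) ?_ ?_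
    · filter_upwards [eventually_gt_atTop 0] with t ht
      simp only [hg]
      rw [norm_mul, Complex.norm_cpow_eq_rpow_re_of_pos ht]
      simp only [Complex.sub_re, Complex.natCast_re]
      gcongr
      exact hC t
    · have := (tendsto_rpow_neg_atTop (y := a - m.re) (by linarith)).const_mul C
      simpa using this
  have hlim3 : Tendsto (fun R => g R - g x) atTop (𝓝 (∫ t in Ioi x, g' t)) := by
    refine hlim1.congr' ?_
    filter_upwards [eventually_ge_atTop x] with R hR
    exact hmain R hR
  have h := tendsto_nhds_unique hlim3 hlim2
  rw [hg', integral_add (i1.const_mul _) (i2.const_mul _), integral_const_mul, integral_const_mul] at h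
  rw [JJ, JJ]
  linear_combination h


open MeasureTheory Set in
lemma zeta_int (m : ℂ) (hm : m.re < -1) :
    riemannZeta (-m) = -m * ∫ t : ℝ in Ioi (1:ℝ), (⌊t⌋₊ : ℂ) * (t:ℂ)^(m-1) := by
  have hs : (1:ℝ) < (-m).re := by simp; linarith
  have h := LSeries_eq_mul_integral_of_nonneg (fun _ => 1) (r := 1) zero_le_one (s := -m) hs (by
      simp only [Finset.sum_const, Nat.card_Icc, Real.rpow_one]
      simp only [add_tsub_cancel_right, nsmul_eq_mul, mul_one]
      exact Asymptotics.isBigO_refl _ _) (fun _ => zero_le_one)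
  have h2 : LSeries (fun _ => ((1:ℝ):ℂ)) (-m) = riemannZeta (-m) := by
    have := LSeries_one_eq_riemannZeta hs
    rw [← this]
    congr 1
  rw [h2] at h
  rw [h]
  congr 1
  refine setIntegral_congr_fun measurableSet_Ioi fun t _ => ?_
  rw [show -(-m+1) = m - 1 by ring]
  simp

open MeasureTheory Set in
lemma floor_int (m : ℂ) (hm : m.re < -1) (x : ℝ) (hx : 0 < x) :
    IntegrableOn (fun t : ℝ => (⌊t⌋₊ : ℂ) * (t:ℂ)^(m-1)) (Ioi x) ∧
    ∫ t : ℝ in Ioi x, (⌊t⌋₊ : ℂ) * (t:ℂ)^(m-1) = -(x:ℂ)^(m+1)/(m+1) + (x:ℂ)^m/(2*m) - JJ 1 m x := by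
  have i0 : IntegrableOn (fun t : ℝ => (t:ℂ)^m) (Ioi x) := integrableOn_Ioi_cpow_of_lt hm hx
  have i1 : IntegrableOn (fun t : ℝ => (t:ℂ)^(m-1)) (Ioi x) := integrableOn_Ioi_cpow_of_lt (by simp; linarith) hx
  have i2 := bern_int 1 (m-(1:ℕ)) (by simp; linarith) x hx
  have he : EqOn (fun t : ℝ => (t:ℂ)^m - (1/2:ℂ) * (t:ℂ)^(m-1) - (bernPoly 1 (Int.fract t) : ℂ) * (t:ℂ)^(m-(1:ℕ)))
     (fun t : ℝ => (⌊t⌋₊ : ℂ) * (t:ℂ)^(m-1)) (Ioi x) := by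
    intro t ht
    have ht0 : 0 < t := hx.trans ht
    have htc : (t:ℂ) ≠ 0 := by exact_mod_cast ht0.ne'
    simp only [bernPoly_eq, bernoulliFun_one, Nat.cast_one]
    have : (⌊t⌋₊ : ℂ) = (t:ℂ) - (Int.fract t : ℝ) := by
      rw [Int.fract, ← natCast_floor_eq_intCast_floor ht0.le]; push_cast; ring
    rw [this]
    have e : (t:ℂ)^m = t * (t:ℂ)^(m-1) := by
      rw [Complex.cpow_sub _ _ htc, Complex.cpow_one]; field_simp
    rw [e]; push_cast; ring
  have i01 := i0.sub (i1.const_mul (1/2:ℂ))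
  constructor
  · exact (i01.sub i2).congr_fun he measurableSet_Ioi
  · rw [← setIntegral_congr_fun measurableSet_Ioi he]
    have hm0 : m ≠ 0 := by rintro rfl; simp at hm; linarith
    rw [JJ]
    have e1 := integral_sub i01 i2
    have e2 := integral_sub i0 (i1.const_mul (1/2:ℂ))
    simp only [Pi.sub_apply] at e1 e2
    rw [e1, e2, integral_const_mul, integral_Ioi_cpow_of_lt hm hx, integral_Ioi_cpow_of_lt (by simp; linarith) hx]
    rw [sub_add_cancel]
    field_simp
    ring

open MeasureTheory Set in
lemma abel (m : ℂ) (hm : m.re < -1) (x : ℝ) (hx : 0 < x) :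
    ∑ k ∈ Finset.Icc 1 ⌊x⌋₊, (k:ℂ)^m = (⌊x⌋₊ : ℂ) * (x:ℂ)^m + riemannZeta (-m) +
      m * ∫ t : ℝ in Ioi x, (⌊t⌋₊ : ℂ) * (t:ℂ)^(m-1) := by
  have hm0 : m ≠ 0 := by rintro rfl; simp at hm; linarith
  rw [zeta_int m hm]
  rcases lt_or_ge x 1 with h1 | h1
  · have hf : ⌊x⌋₊ = 0 := Nat.floor_eq_zero.mpr h1
    rw [hf]
    have hu : Ioi x = Ioc x 1 ∪ Ioi 1 := (Ioc_union_Ioi_eq_Ioi h1.le).symm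
    have hI := (floor_int m hm x hx).1
    rw [hu, setIntegral_union (by rw [disjoint_left]; intro t ht ht2; exact absurd ht.2 (not_le.mpr ht2)) measurableSet_Ioi (hI.mono_set Ioc_subset_Ioi_self)
      (hI.mono_set (Ioi_subset_Ioi h1.le)), integral_Ioc_eq_integral_Ioo]
    have : ∫ t : ℝ in Ioo x 1, (⌊t⌋₊ : ℂ) * (t:ℂ)^(m-1) = 0 := by
      refine setIntegral_eq_zero_of_forall_eq_zero fun t ht => ?_
      rw [Nat.floor_eq_zero.mpr ht.2]; simp
    rw [this]; simp
  · have hd : ∀ t : ℝ, 0 < t → HasDerivAt (fun y : ℝ => (y:ℂ)^m) (m * (t:ℂ)^(m-1)) t := fun t ht =>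
      hasDerivAt_ofReal_cpow_const ht.ne' hm0
    have hA := sum_mul_eq_sub_integral_mul₀ (f := fun y : ℝ => (y:ℂ)^m) (c := fun k => if k = 0 then 0 else 1) rfl x
      (fun t ht => (hd t (zero_lt_one.trans_le ht.1)).differentiableAt) (by
        have hc : ContinuousOn (fun t : ℝ => m * (t:ℂ)^(m-1)) (Icc 1 x) := by
          intro t ht
          refine ContinuousAt.continuousWithinAt (ContinuousAt.mul continuousAt_const ?_)
          exact Complex.continuousAt_ofReal_cpow_const _ _ (Or.inr (zero_lt_one.trans_le ht.1).ne')
        refine hc.integrableOn_Icc.congr_fun (fun t ht => ?_) measurableSet_Icc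
        exact ((hd t (zero_lt_one.trans_le ht.1)).deriv).symm)
    have hsum : ∀ n : ℕ, ∑ k ∈ Finset.Icc 0 n, (if k = 0 then (0:ℂ) else 1) = n := by
      intro n
      induction n with
      | zero => simp
      | succ n ih => rw [Finset.sum_Icc_succ_top (by omega), ih]; simp
    have hsum2 : ∀ n : ℕ, ∑ k ∈ Finset.Icc 0 n, ((k:ℝ):ℂ)^m * (if k = 0 then (0:ℂ) else 1) = ∑ k ∈ Finset.Icc 1 n, (k:ℂ)^m := by
      intro n
      induction n with
      | zero => simp
      | succ n ih => rw [Finset.sum_Icc_succ_top (by omega), ih, Finset.sum_Icc_succ_top (by omega)]; simp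
    simp only [hsum] at hA
    rw [hsum2] at hA
    rw [hA]
    have e : ∫ t : ℝ in Ioc 1 x, deriv (fun y : ℝ => (y:ℂ)^m) t * (⌊t⌋₊:ℂ) = m * ∫ t : ℝ in Ioc 1 x, (⌊t⌋₊ : ℂ) * (t:ℂ)^(m-1) := by
      rw [← integral_const_mul]
      refine setIntegral_congr_fun measurableSet_Ioc fun t ht => ?_
      rw [(hd t (zero_lt_one.trans ht.1)).deriv]; ring
    rw [e]
    have hI := (floor_int m hm 1 zero_lt_one).1
    rw [← Ioc_union_Ioi_eq_Ioi h1, setIntegral_union (by rw [disjoint_left]; intro t ht ht2; exact absurd ht.2 (not_le.mpr ht2)) measurableSet_Ioi (hI.mono_set Ioc_subset_Ioi_self)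
      (hI.mono_set (Ioi_subset_Ioi h1))]
    ring

def EMP (a : ℕ) (m : ℂ) (x : ℝ) : Prop :=
    (m+1) * ((∑ k ∈ Finset.Icc 1 ⌊x⌋₊, (k:ℂ)^m) - riemannZeta (-m)) = (x:ℂ)^(m+1) +
     ∑ k ∈ Finset.Icc 1 a, cc m (Int.fract x) k * (x:ℂ)^(m-k+1) - rf (-m-1) (a+1) / a.factorial * JJ a m x

lemma EM_base (m : ℂ) (hm : m.re < -1) (x : ℝ) (hx : 0 < x) : EMP 1 m x := by
  have hm0 : m ≠ 0 := by rintro rfl; simp at hm; linarith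
  have hm1 : m + 1 ≠ 0 := by
    intro h
    have := congrArg Complex.re h
    simp at this; linarith
  have hxc : (x:ℂ) ≠ 0 := by exact_mod_cast hx.ne'
  rw [EMP, abel m hm x hx, (floor_int m hm x hx).2]
  have : (⌊x⌋₊ : ℂ) = (x:ℂ) - (Int.fract x : ℝ) := by
    rw [Int.fract, ← natCast_floor_eq_intCast_floor hx.le]; push_cast; ring
  rw [this, Complex.cpow_add _ _ hxc, Complex.cpow_one]
  simp [cc_eq, rf, Finset.prod_range_succ, bernPoly_eq]
  field_simp
  ring

lemma EM_step (a : ℕ) (ha : 1 ≤ a) (m : ℂ) (hm : m.re < a - 1) (x : ℝ) (hx : 0 < x) (h : EMP a m x) :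
    EMP (a+1) m x := by
  rw [EMP] at h ⊢
  rw [h, Finset.sum_Icc_succ_top (by omega), rf_succ _ (a+1), cc_eq]
  have hs := JJ_step a ha m hm x hx
  have ha1 : (a+1 : ℂ) ≠ 0 := by exact_mod_cast Nat.succ_ne_zero a
  have hf : (a.factorial : ℂ) ≠ 0 := by exact_mod_cast a.factorial_ne_zero
  have hJ : JJ a m x = (-(bernPoly (a+1) (Int.fract x) * (x:ℂ)^(m-a)) - (m-a) * JJ (a+1) m x)/(a+1) := by
    rw [← hs]; field_simp
  rw [hJ, Nat.factorial_succ]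
  push_cast
  rw [show m - ((a:ℂ)+1) + 1 = m - a by ring]
  field_simp
  ring

lemma EM_left (a : ℕ) (ha : 1 ≤ a) (m : ℂ) (hm : m.re < -1) (x : ℝ) (hx : 0 < x) : EMP a m x := by
  induction a, ha using Nat.le_induction with
  | base => exact EM_base m hm x hx
  | succ a ha ih => 
    refine EM_step a ha m ?_ x hx ih
    have : (1:ℝ) ≤ a := by exact_mod_cast ha
    linarith


open MeasureTheory Set Filter Topology Asymptotics in
lemma JJ_diff (a : ℕ) (x : ℝ) (hx : 0 < x) (m : ℂ) (hm : m.re < a - 1) :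
    DifferentiableAt ℂ (fun m => JJ a m x) m := by
  set f : ℝ → ℂ := (Ioi x).indicator (fun t => (bernPoly a (Int.fract t) : ℂ)) with hf
  have he : (fun m => JJ a m x) = fun m => mellin f (m - a + 1) := by
    funext m
    rw [JJ, mellin]
    have : ∀ t : ℝ, ((t:ℂ) ^ (m - a + 1 - 1)) • f t = (Ioi x).indicator (fun t : ℝ => (bernPoly a (Int.fract t) : ℂ) * (t:ℂ)^(m-a)) t := by
      intro t
      by_cases h : t ∈ Ioi x
      · rw [hf, indicator_of_mem h, indicator_of_mem h, smul_eq_mul, mul_comm]; ring_nf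
      · rw [hf, indicator_of_notMem h, indicator_of_notMem h]; simp
    simp only [this]
    rw [setIntegral_indicator measurableSet_Ioi]
    congr 2
    ext t; simp; intro h; linarith
  rw [he]
  obtain ⟨C, hC⟩ := bern_bdd a
  have hC0 : 0 ≤ C := (norm_nonneg _).trans (hC 0)
  have hfC : ∀ t, ‖f t‖ ≤ C := by
    intro t
    by_cases h : t ∈ Ioi x
    · rw [hf, indicator_of_mem h]; exact hC t
    · rw [hf, indicator_of_notMem h]; simpa using hC0
  have hmeas : Measurable f := (bern_meas a).indicator measurableSet_Ioi
  have hd : DifferentiableAt ℂ (mellin f) (m - a + 1) := by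
    refine mellin_differentiableAt_of_isBigO_rpow (a := 0) (b := (m-a+1).re - 1) ?_ ?_ ?_ ?_ ?_
    · have : LocallyIntegrable (fun _ : ℝ => C) := continuous_const.locallyIntegrable
      have h2 : LocallyIntegrable f := this.mono hmeas.aestronglyMeasurable
        (Eventually.of_forall fun t => (hfC t).trans (Real.le_norm_self _))
      exact h2.locallyIntegrableOn _
    · refine IsBigO.of_bound C (Eventually.of_forall fun t => ?_)
      simpa using hfC t
    · simp; linarith
    · refine EventuallyEq.trans_isBigO (f₂ := fun _ => (0:ℂ)) ?_ (isBigO_zero _ _)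
      have : ∀ᶠ t in 𝓝[>] (0:ℝ), t < x := nhdsWithin_le_nhds (eventually_lt_nhds hx)
      filter_upwards [this] with t ht
      rw [hf, indicator_of_notMem]
      simp [ht.le]
    · linarith
  have hg : DifferentiableAt ℂ (fun m : ℂ => m - a + 1) m := by fun_prop
  exact DifferentiableAt.comp (g := mellin f) (f := fun m : ℂ => m - a + 1) m hd hg

open DirichletCharacter in
lemma EM_cont (a : ℕ) (ha : 1 ≤ a) (m : ℂ) (hm : m.re < a - 1) (hm1 : m ≠ -1) (x : ℝ) (hx : 0 < x) : EMP a m x := by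
  set Z : ℂ → ℂ := fun m => -LFunctionTrivChar₁ 1 (-m) with hZ
  have hZe : ∀ m, m ≠ -1 → Z m = (m+1) * riemannZeta (-m) := by
    intro m hm
    have h1 : -m ≠ 1 := by intro h; apply hm; linear_combination -h
    simp only [hZ]
    rw [LFunctionTrivChar₁, Function.update_of_ne h1, LFunctionTrivChar, LFunction_modOne_eq]; ring
  have hZd : Differentiable ℂ Z := ((differentiable_LFunctionTrivChar₁ 1).comp differentiable_neg).neg
  have hxc : (x:ℂ) ≠ 0 := by exact_mod_cast hx.ne'
  set F : ℂ → ℂ := fun m => (m+1) * (∑ k ∈ Finset.Icc 1 ⌊x⌋₊, (k:ℂ)^m) - Z m - ((x:ℂ)^(m+1) +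
     ∑ k ∈ Finset.Icc 1 a, cc m (Int.fract x) k * (x:ℂ)^(m-k+1) - rf (-m-1) (a+1) / a.factorial * JJ a m x) with hF
  set U : Set ℂ := {m | m.re < a - 1} with hU
  have hUo : IsOpen U := isOpen_lt Complex.continuous_re continuous_const
  have hUc : Convex ℝ U := convex_halfSpace_re_lt _
  have hFd : DifferentiableOn ℂ F U := by
    intro m hm
    refine DifferentiableAt.differentiableWithinAt ?_
    have hJ := JJ_diff a x hx m hm
    have h1 : DifferentiableAt ℂ (fun m : ℂ => ∑ k ∈ Finset.Icc 1 ⌊x⌋₊, (k:ℂ)^m) m := by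
      refine DifferentiableAt.fun_sum fun k hk => ?_
      have hk0 : (k:ℂ) ≠ 0 := by
        have := (Finset.mem_Icc.mp hk).1
        exact_mod_cast (by omega : k ≠ 0)
      exact differentiableAt_id.const_cpow (Or.inl hk0)
    have h2 : ∀ c : ℂ, DifferentiableAt ℂ (fun m : ℂ => (x:ℂ)^(m+c)) m := fun c =>
      (differentiableAt_id.add_const c).const_cpow (Or.inl hxc)
    have hrf : ∀ n, DifferentiableAt ℂ (fun m : ℂ => rf (-m-1) n) m := by
      intro n
      unfold rf
      fun_prop
    have h3 : DifferentiableAt ℂ (fun m : ℂ => ∑ k ∈ Finset.Icc 1 a, cc m (Int.fract x) k * (x:ℂ)^(m-k+1)) m := by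
      refine DifferentiableAt.fun_sum fun k hk => ?_
      refine DifferentiableAt.mul ?_ ?_
      · simp only [cc_eq]; exact (hrf k).mul_const _
      · have := h2 (-k+1)
        simpa [sub_eq_add_neg, add_assoc] using this
    have hz := hZd m
    refine DifferentiableAt.sub (DifferentiableAt.sub (DifferentiableAt.mul (by fun_prop) h1) hz)
      (((h2 1).add h3).sub (((hrf (a+1)).div_const _).mul hJ))
  have hev : F =ᶠ[nhds (-2:ℂ)] 0 := by
    have ho : IsOpen {m : ℂ | m.re < -1} := isOpen_lt Complex.continuous_re continuous_const
    filter_upwards [ho.mem_nhds (by simp : (-2:ℂ) ∈ {m : ℂ | m.re < -1})] with m hm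
    have h := EM_left a ha m hm x hx
    rw [EMP] at h
    have hne : m ≠ -1 := by rintro rfl; simp at hm
    simp only [hF, Pi.zero_apply]
    rw [hZe m hne]
    linear_combination h
  have h2U : (-2:ℂ) ∈ U := by
    have : (1:ℝ) ≤ a := by exact_mod_cast ha
    simp [hU]; linarith
  have := (hFd.analyticOnNhd hUo).eqOn_zero_of_preconnected_of_eventuallyEq_zero hUc.isPreconnected h2U hev hm
  simp only [hF, Pi.zero_apply] at this
  rw [hZe m hm1] at this
  rw [EMP]
  linear_combination this

/-- the claim in terms of TT -/
def PP (a : ℕ) (m : ℂ) (x : ℝ) : Prop :=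
  Summable (fun k => ‖TT m (Int.fract x) a (k+1) / risingProd x (k+1)‖) ∧
  (m+1) * ((∑ k ∈ Finset.Icc 1 ⌊x⌋₊, (k:ℂ)^m) - riemannZeta (-m)) = (x:ℂ)^(m+1) +
     ∑ k ∈ Finset.Icc 1 a, cc m (Int.fract x) k * (x:ℂ)^(m-k+1) +
     (x:ℂ)^(m-a+1) * ∑' k, TT m (Int.fract x) a (k+1) / risingProd x (k+1)

lemma PP_large (a : ℕ) (ha : 2 ≤ a) (m : ℂ) (hm : m.re < a - 1) (hm1 : m ≠ -1) (x : ℝ) (hx : 0 < x) : PP a m x := by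
  have h := large_a m x hx a ha (by simp; linarith)
  refine ⟨h.1, ?_⟩
  have h2 := EM_cont a (by omega) m hm hm1 x hx
  rw [EMP, JJ] at h2
  rw [h2, h.2]
  have hxc : (x:ℂ) ≠ 0 := by exact_mod_cast hx.ne'
  have e : (x:ℂ)^(m-a+1) * (x:ℂ)^(-m-1+a) = 1 := by
    rw [← Complex.cpow_add _ _ hxc, show m-a+1 + (-m-1+a) = 0 by ring, Complex.cpow_zero]
  linear_combination (rf (-m-1) (a+1) / a.factorial *
    ∫ t : ℝ in Set.Ioi x, (bernPoly a (Int.fract t) : ℂ) * (t:ℂ)^(m-a)) * e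

lemma PP_step (a : ℕ) (m : ℂ) (x : ℝ) (hx : 0 < x) (h : PP (a+1) m x) : PP a m x := by
  obtain ⟨h1, h2⟩ := h
  obtain ⟨h3, h4⟩ := step_down m (Int.fract x) x hx a h1
  refine ⟨h3, ?_⟩
  rw [h2, Finset.sum_Icc_succ_top (by omega)]
  have hxc : (x:ℂ) ≠ 0 := by exact_mod_cast hx.ne'
  have e : (x:ℂ)^(m-a+1) = (x:ℂ)^(m-((a+1:ℕ):ℂ)+1) * x := by
    rw [show m - (a:ℂ) + 1 = (m-((a+1:ℕ):ℂ)+1) + 1 by push_cast; ring, Complex.cpow_add _ _ hxc, Complex.cpow_one]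
  rw [e, mul_assoc, h4]; ring

lemma PP_all (a : ℕ) (m : ℂ) (hm1 : m ≠ -1) (x : ℝ) (hx : 0 < x) : PP a m x := by
  obtain ⟨N, hN⟩ := exists_nat_gt (m.re + 1)
  have hd : ∀ n b : ℕ, PP (b + n) m x → PP b m x := by
    intro n
    induction n with
    | zero => intro b h; exact h
    | succ n ih => intro b h; exact ih b (PP_step _ m x hx h)
  refine hd (N+2) a (PP_large _ (by omega) m ?_ hm1 x hx)
  push_cast
  have : (0:ℝ) ≤ a := Nat.cast_nonneg a
  linarith


open Finset in
/-- The extended generalized Faulhaber formula with shift parameter `a`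
(formula (29) of Theorem 5.1). -/
theorem extended_generalized_faulhaber_shift (m : ℂ) (hm : m ≠ -1)
    (x : ℝ) (hx : 0 < x) (a : ℕ) :
    Summable (fun k : ℕ =>
      ‖(-1 : ℂ) ^ (k + 1 + a) *
          (∑ l ∈ Icc 1 (k + 1),
            cchoose (m + 1) (l + a) * (S1 (k + 1) l : ℂ) * (bernPoly (l + a) (Int.fract x) : ℂ)) /
        risingProd (x : ℂ) (k + 1)‖) ∧
    (∑ k ∈ Icc 1 ⌊x⌋₊, (k : ℂ) ^ m) =
      (x : ℂ) ^ (m + 1) / (m + 1) + riemannZeta (-m) +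
        1 / (m + 1) *
          ∑ k ∈ Icc 1 a,
            (-1 : ℂ) ^ k * cchoose (m + 1) k * (bernPoly k (Int.fract x) : ℂ) *
              (x : ℂ) ^ (m - k + 1) +
        (x : ℂ) ^ (m - a + 1) / (m + 1) *
          ∑' k : ℕ,
            (-1 : ℂ) ^ (k + 1 + a) *
                (∑ l ∈ Icc 1 (k + 1),
                  cchoose (m + 1) (l + a) * (S1 (k + 1) l : ℂ) *
                    (bernPoly (l + a) (Int.fract x) : ℂ)) /
              risingProd (x : ℂ) (k + 1) := by
  obtain ⟨h1, h2⟩ := PP_all a m hm x hx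
  have hm1 : m + 1 ≠ 0 := fun h => hm (by linear_combination h)
  simp only [TT_term]
  refine ⟨h1, ?_⟩
  have h3 : (∑ k ∈ Icc 1 ⌊x⌋₊, (k : ℂ) ^ m) = riemannZeta (-m) + ((x:ℂ)^(m+1) +
     ∑ k ∈ Finset.Icc 1 a, cc m (Int.fract x) k * (x:ℂ)^(m-k+1) +
     (x:ℂ)^(m-a+1) * ∑' k, TT m (Int.fract x) a (k+1) / risingProd x (k+1)) / (m+1) := by
    rw [← h2]; field_simp; ring
  rw [h3]
  simp only [cc]
  field_simp
  ring
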